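/- Let m ≥ 1 be a real number and let p, q be vectors in ℝⁿ with p + q ≠ 0. Then |p+q|^m ≤ |p|^m + m·|p+q|^{m-2}·⟨p+q, q⟩, where ⟨·,·⟩ denotes the Euclidean inner product and |·| the Euclidean norm. -/

import Mathlib

open scoped RealInnerProductSpace

/-! By Cauchy–Schwarz, `|p+q| (|p+q| - |p|) ≤ ⟨p+q, q⟩`. This reduces the claim to the tangent line
of `t ↦ t ^ m` on `[0, ∞)`, taken at `|p+q|` and evaluated at `|p|`; that inequality is weighted
AM-GM for `|p+q| ^ m` and `|p| ^ m` with weights `1 - 1/m` and `1/m`. -/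

theorem rpow_add_mul_rpow_sub_one_mul_sub_le_rpow {a b m : ℝ} (ha : 0 ≤ a) (hb : 0 ≤ b)
    (hm : 1 ≤ m) : a ^ m + m * a ^ (m - 1) * (b - a) ≤ b ^ m := by
  have hm_pos : 0 < m := by linarith
  have am_gm : a ^ (m - 1) * b ≤ (m - 1) / m * a ^ m + 1 / m * b ^ m := by
    have h := Real.geom_mean_le_arith_mean2_weighted (div_nonneg (sub_nonneg.mpr hm) hm_pos.le)
      (one_div_nonneg.mpr hm_pos.le) (Real.rpow_nonneg ha m) (Real.rpow_nonneg hb m)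
      (by field_simp; ring)
    rwa [← Real.rpow_mul ha, ← Real.rpow_mul hb, mul_div_cancel₀ _ hm_pos.ne',
      mul_one_div_cancel hm_pos.ne', Real.rpow_one] at h
  have rpow_eq : a ^ m = a ^ (m - 1) * a := by
    rw [← Real.rpow_add_one' ha (by linarith), sub_add_cancel]
  calc a ^ m + m * a ^ (m - 1) * (b - a)
      = m * (a ^ (m - 1) * b) - (m - 1) * a ^ m := by rw [rpow_eq]; ring
    _ ≤ m * ((m - 1) / m * a ^ m + 1 / m * b ^ m) - (m - 1) * a ^ m := by gcongr
    _ = b ^ m := by field_simp; ring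

section InnerProductSpace

variable {E : Type*} [SeminormedAddCommGroup E] [InnerProductSpace ℝ E]

theorem norm_mul_norm_sub_norm_le_inner_sub (x y : E) : ‖x‖ * (‖x‖ - ‖y‖) ≤ ⟪x, x - y⟫ := by
  rw [inner_sub_right, real_inner_self_eq_norm_mul_norm, mul_sub]
  exact sub_le_sub_left (real_inner_le_norm x y) _

theorem rpow_norm_add_le_tangent_line_general {m : ℝ} (hm : 1 ≤ m) {p q : E}
    (hpq : ‖p + q‖ ≠ 0) :
    ‖p + q‖ ^ m ≤ ‖p‖ ^ m + m * ‖p + q‖ ^ (m - 2) * ⟪p + q, q⟫ := by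
  have tangent_line : ‖p + q‖ ^ m + m * ‖p + q‖ ^ (m - 1) * (‖p‖ - ‖p + q‖) ≤ ‖p‖ ^ m :=
    rpow_add_mul_rpow_sub_one_mul_sub_le_rpow (norm_nonneg _) (norm_nonneg _) hm
  have cauchy_schwarz : ‖p + q‖ * (‖p + q‖ - ‖p‖) ≤ ⟪p + q, q⟫ := by
    simpa only [add_sub_cancel_left] using norm_mul_norm_sub_norm_le_inner_sub (p + q) p
  have rpow_eq : ‖p + q‖ ^ (m - 1) = ‖p + q‖ ^ (m - 2) * ‖p + q‖ := by
    rw [← Real.rpow_add_one hpq]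
    ring_nf
  calc ‖p + q‖ ^ m
      ≤ ‖p‖ ^ m + m * ‖p + q‖ ^ (m - 1) * (‖p + q‖ - ‖p‖) := by linarith
    _ = ‖p‖ ^ m + m * ‖p + q‖ ^ (m - 2) * (‖p + q‖ * (‖p + q‖ - ‖p‖)) := by rw [rpow_eq]; ring
    _ ≤ ‖p‖ ^ m + m * ‖p + q‖ ^ (m - 2) * ⟪p + q, q⟫ := by gcongr

end InnerProductSpace

/-- Tangent-line inequality for the convex function `t ↦ |t|^m`, `m ≥ 1`:
for vectors `p, q` in Euclidean space with `p + q ≠ 0`,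
`|p+q|^m ≤ |p|^m + m·|p+q|^(m-2)·⟨p+q, q⟩`. -/
theorem rpow_norm_add_le_tangent_line {n : ℕ} (m : ℝ) (hm : 1 ≤ m)
    (p q : EuclideanSpace ℝ (Fin n)) (hpq : p + q ≠ 0) :
    ‖p + q‖ ^ m ≤ ‖p‖ ^ m + m * ‖p + q‖ ^ (m - 2) * ⟪p + q, q⟫ :=
  rpow_norm_add_le_tangent_line_general hm (norm_ne_zero_iff.mpr hpq)
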